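/- Suppose every agent in N has at least one acceptable project. Fix an agent 1 ∈ N and let C, C' ∈ ℝ^N be contribution profiles with C_i = C'_i > 0 for all i ≠ 1 and 0 < C_1 ≤ C'_1. If δ maximizes the Nash product δ ↦ ∏_{i∈N} (u_i(δ))^{C_i} over Δ(1) and δ' maximizes δ ↦ ∏_{i∈N} (u_i(δ))^{C'_i} over Δ(1), then u_1(δ') ≥ u_1(δ). -/

import Mathlib

/-!
Every maximizer of a Nash product with positive exponents gives each agent positive utility, since
the uniform distribution has a positive Nash product.

If `C one < C' one`, the `C'`-product equals the `C`-product times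
`util (u one) d ^ (C' one - C one)`. As `δ` is at least as good as `δ'` for the first product and
`δ'` at least as good as `δ` for the second, the extra factor must be at least as large at `δ'`.

If `C one = C' one`, both distributions maximize the same product. By AM-GM, the square of the
product at their midpoint is at least the product of the two maxima, strictly so if the utilities
of some agent differ; hence maximizers induce the same utilities.
-/

open Finset

/-- A distribution of value `V`: nonnegative and sums to `V`. -/
def IsDistribution {A : Type*} [Fintype A] (δ : A → ℝ) (V : ℝ) : Prop :=
  (∀ x, 0 ≤ δ x) ∧ ∑ x, δ x = V

/-- Agent's (linear) utility of a distribution. -/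
def util {A : Type*} [Fintype A] (u : A → ℝ) (δ : A → ℝ) : ℝ :=
  ∑ x, δ x * u x

/-- The Nash product of a distribution (real exponentiation, `0 ^ 0 = 1`). -/
noncomputable def nashProduct {A N : Type*} [Fintype A] [Fintype N]
    (u : N → A → ℝ) (C : N → ℝ) (δ : A → ℝ) : ℝ :=
  ∏ i, (util (u i) δ) ^ (C i)

/-- A Nash distribution for contribution profile `C`: a maximizer of the Nash
product over `Δ(|C|)`. -/
def IsNashDistribution {A N : Type*} [Fintype A] [Fintype N]
    (u : N → A → ℝ) (C : N → ℝ) (δ : A → ℝ) : Prop :=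
  IsDistribution δ (∑ i, C i) ∧
    ∀ δ' : A → ℝ, IsDistribution δ' (∑ i, C i) →
      nashProduct u C δ' ≤ nashProduct u C δ

lemma util_nonneg {A : Type*} [Fintype A] {u δ : A → ℝ} (hu : ∀ x, 0 ≤ u x)
    (hδ : IsDistribution δ 1) : 0 ≤ util u δ :=
  Finset.sum_nonneg fun x _ => mul_nonneg (hδ.1 x) (hu x)

/-- A maximizer is compared with the uniform distribution, whose Nash product is positive. -/
lemma util_pos_of_max {A N : Type*} [Fintype A] [Nonempty A] [Fintype N]
    {u : N → A → ℝ} (hu : ∀ i x, 0 ≤ u i x) (hacc : ∀ i, ∃ x, 0 < u i x)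
    {C : N → ℝ} (hC : ∀ i, 0 < C i) {δ : A → ℝ}
    (hδ : IsDistribution δ 1 ∧ ∀ d : A → ℝ, IsDistribution d 1 →
      nashProduct u C d ≤ nashProduct u C δ) (i : N) : 0 < util (u i) δ := by
  have hcard : (0 : ℝ) < Fintype.card A := by exact_mod_cast Fintype.card_pos
  have hd : IsDistribution (fun _ : A => (Fintype.card A : ℝ)⁻¹) 1 := by
    refine ⟨fun _ => by positivity, ?_⟩
    simp [hcard.ne']
  have hpos : 0 < nashProduct u C (fun _ : A => (Fintype.card A : ℝ)⁻¹) := by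
    refine Finset.prod_pos fun j _ => Real.rpow_pos_of_pos ?_ _
    obtain ⟨x, hx⟩ := hacc j
    exact Finset.sum_pos' (fun y _ => mul_nonneg (by positivity) (hu j y))
      ⟨x, Finset.mem_univ x, mul_pos (by positivity) hx⟩
  have hne : nashProduct u C δ ≠ 0 := (hpos.trans_le (hδ.2 _ hd)).ne'
  refine (util_nonneg (hu i) hδ.1).lt_of_ne' fun h0 => hne ?_
  refine Finset.prod_eq_zero (Finset.mem_univ i) ?_
  rw [h0, Real.zero_rpow (hC i).ne']

/-- Changing only the exponent of `one` multiplies the Nash product by a power of that agent's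
utility. -/
lemma nashProduct_change_one {A N : Type*} [Fintype A] [Fintype N]
    {u : N → A → ℝ} {one : N} {C C' : N → ℝ} (hCC' : ∀ i, i ≠ one → C i = C' i)
    {d : A → ℝ} (hd : ∀ i, 0 < util (u i) d) :
    nashProduct u C' d = nashProduct u C d * util (u one) d ^ (C' one - C one) := by
  have h1 : util (u one) d ^ (C' one - C one) = ∏ i, util (u i) d ^ (C' i - C i) := by
    symm
    refine Finset.prod_eq_single one (fun i _ hi => ?_)
      (fun h => absurd (Finset.mem_univ one) h)
    rw [hCC' i hi, sub_self, Real.rpow_zero]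
  rw [h1, nashProduct, nashProduct, ← Finset.prod_mul_distrib]
  refine Finset.prod_congr rfl fun i _ => ?_
  rw [← Real.rpow_add (hd i), add_sub_cancel]

/-- Maximizers of the same Nash product induce the same utilities, by strict AM-GM at their
midpoint. -/
lemma util_eq_of_max {A N : Type*} [Fintype A] [Nonempty A] [Fintype N]
    {u : N → A → ℝ} (hu : ∀ i x, 0 ≤ u i x) (hacc : ∀ i, ∃ x, 0 < u i x)
    {C : N → ℝ} (hC : ∀ i, 0 < C i) {δ δ' : A → ℝ}
    (hδ : IsDistribution δ 1 ∧ ∀ d : A → ℝ, IsDistribution d 1 →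
      nashProduct u C d ≤ nashProduct u C δ)
    (hδ' : IsDistribution δ' 1 ∧ ∀ d : A → ℝ, IsDistribution d 1 →
      nashProduct u C d ≤ nashProduct u C δ') (i : N) : util (u i) δ = util (u i) δ' := by
  by_contra hne
  have ha := util_pos_of_max hu hacc hC hδ
  have hb := util_pos_of_max hu hacc hC hδ'
  set m : A → ℝ := fun x => (δ x + δ' x) / 2 with hm
  have hmd : IsDistribution m 1 := by
    refine ⟨fun x => div_nonneg (add_nonneg (hδ.1.1 x) (hδ'.1.1 x)) zero_le_two, ?_⟩
    simp only [hm]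
    rw [← Finset.sum_div, Finset.sum_add_distrib, hδ.1.2, hδ'.1.2]
    norm_num
  have hmu : ∀ j, util (u j) m = (util (u j) δ + util (u j) δ') / 2 := by
    intro j
    simp only [util, hm]
    rw [← Finset.sum_add_distrib, Finset.sum_div]
    exact Finset.sum_congr rfl fun x _ => by ring
  have hmpos : ∀ j, 0 < util (u j) m := fun j => by
    rw [hmu]; have := ha j; have := hb j; positivity
  have hlt : nashProduct u C δ * nashProduct u C δ' < nashProduct u C m * nashProduct u C m := by
    simp only [nashProduct, ← Finset.prod_mul_distrib]
    refine Finset.prod_lt_prod (fun j _ => ?_) (fun j _ => ?_) ⟨i, Finset.mem_univ i, ?_⟩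
    · exact mul_pos (Real.rpow_pos_of_pos (ha j) _) (Real.rpow_pos_of_pos (hb j) _)
    · rw [← Real.mul_rpow (ha j).le (hb j).le, ← Real.mul_rpow (hmpos j).le (hmpos j).le]
      refine Real.rpow_le_rpow (mul_pos (ha j) (hb j)).le ?_ (hC j).le
      rw [hmu]
      nlinarith [sq_nonneg (util (u j) δ - util (u j) δ')]
    · rw [← Real.mul_rpow (ha i).le (hb i).le, ← Real.mul_rpow (hmpos i).le (hmpos i).le]
      refine Real.rpow_lt_rpow (mul_pos (ha i) (hb i)).le ?_ (hC i)
      rw [hmu]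
      nlinarith [sq_pos_of_ne_zero (sub_ne_zero.mpr hne)]
  have hm0 : 0 ≤ nashProduct u C m :=
    Finset.prod_nonneg fun j _ => (Real.rpow_pos_of_pos (hmpos j) _).le
  have h1 := hδ.2 m hmd
  exact absurd hlt (not_lt.mpr (mul_le_mul h1 (hδ'.2 m hmd) hm0 (hm0.trans h1)))

theorem nash_utility_monotone_in_contribution {A N : Type*}
    [Fintype A] [Nonempty A] [Fintype N]
    (u : N → A → ℝ) (hu : ∀ i x, 0 ≤ u i x)
    (hacc : ∀ i, ∃ x, 0 < u i x)
    (one : N)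
    (C C' : N → ℝ) (hC : ∀ i, 0 < C i)
    (hCC' : ∀ i, i ≠ one → C i = C' i)
    (hone : C one ≤ C' one)
    (δ δ' : A → ℝ)
    (hδ : IsDistribution δ 1 ∧ ∀ d : A → ℝ, IsDistribution d 1 →
      nashProduct u C d ≤ nashProduct u C δ)
    (hδ' : IsDistribution δ' 1 ∧ ∀ d : A → ℝ, IsDistribution d 1 →
      nashProduct u C' d ≤ nashProduct u C' δ') :
    util (u one) δ ≤ util (u one) δ' := by
  have hC' : ∀ i, 0 < C' i := fun i => by
    by_cases hi : i = one
    · subst hi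
      exact (hC i).trans_le hone
    · exact hCC' i hi ▸ hC i
  have ha := util_pos_of_max hu hacc hC hδ
  have hb := util_pos_of_max hu hacc hC' hδ'
  rcases hone.eq_or_lt with heq | hlt
  · have hCeq : C = C' := funext fun i => by
      by_cases hi : i = one
      · rw [hi, heq]
      · exact hCC' i hi
    subst hCeq
    exact (util_eq_of_max hu hacc hC hδ hδ' one).le
  · have h1 := hδ.2 δ' hδ'.1
    have h2 := hδ'.2 δ hδ.1
    rw [nashProduct_change_one hCC' ha, nashProduct_change_one hCC' hb] at h2
    have hp : 0 < nashProduct u C δ' :=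
      Finset.prod_pos fun j _ => Real.rpow_pos_of_pos (hb j) _
    have h3 := (mul_le_mul_of_nonneg_right h1
      (Real.rpow_pos_of_pos (ha one) (C' one - C one)).le).trans h2
    exact (Real.rpow_le_rpow_iff (ha one).le (hb one).le (sub_pos.mpr hlt)).mp
      (le_of_mul_le_mul_left h3 hp)
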